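/- There exists a universal constant C > 0 (independent of d, σ, T, t, β and p₀) with the following property: for every d ≥ 1, σ > 0, T > 0, every continuous, positive, non-decreasing noise schedule β on [0,T], every t ∈ (0, T], and every probability density p₀ on ℝ^d, the forward marginal density p_t satisfies ∫_{ℝ^d} ‖ ∇²log p_t(x) + σ^{−2} I_d ‖_Fr⁴ p_t(x) dx ≤ C ( σ_t^{−8} + σ^{−8} ) ( ∫_{ℝ^d} ‖z‖⁸ dγ_d(z) + d⁴ ), where ∇²log p_t(x) denotes the Hessian matrix of log p_t at x, ‖·‖_Fr the Frobenius norm on ℝ^{d×d}, and γ_d = N(0, I_d) the standard Gaussian measure on ℝ^d. -/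

import Mathlib

open MeasureTheory Real Set
open scoped ENNReal

noncomputable section

/-- Density of the standard Gaussian `N(0, I_d)` on `ℝ^d`. -/
def stdGaussDensity (d : ℕ) (x : EuclideanSpace ℝ (Fin d)) : ℝ :=
  (2 * π) ^ (-(d : ℝ) / 2) * Real.exp (-‖x‖ ^ 2 / 2)

/-- The standard Gaussian measure `γ_d = N(0, I_d)` on `ℝ^d`. -/
def stdGaussMeasure (d : ℕ) : Measure (EuclideanSpace ℝ (Fin d)) :=
  volume.withDensity fun x => ENNReal.ofReal (stdGaussDensity d x)

/-- `m_t = exp(−(1/(2σ²)) ∫₀^t β(s) ds)` (here `σ2 = σ²`). -/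
def mcoef (σ2 : ℝ) (β : ℝ → ℝ) (t : ℝ) : ℝ :=
  Real.exp (-(1 / (2 * σ2)) * ∫ s in (0:ℝ)..t, β s)

/-- `σ_t = (σ²(1 − m_t²))^{1/2}` (here `σ2 = σ²`). -/
def scoef (σ2 : ℝ) (β : ℝ → ℝ) (t : ℝ) : ℝ :=
  Real.sqrt (σ2 * (1 - mcoef σ2 β t ^ 2))

/-- The forward marginal density at time `t` started from the density `p0`. -/
def forwardDensity (d : ℕ) (σ2 : ℝ) (β : ℝ → ℝ) (p0 : EuclideanSpace ℝ (Fin d) → ℝ)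
    (t : ℝ) (y : EuclideanSpace ℝ (Fin d)) : ℝ :=
  ∫ x, (2 * π * scoef σ2 β t ^ 2) ^ (-(d : ℝ) / 2) *
    Real.exp (-‖y - mcoef σ2 β t • x‖ ^ 2 / (2 * scoef σ2 β t ^ 2)) * p0 x

/-- The Hessian matrix of `f : ℝ^d → ℝ` at `x`. -/
def hessMatrix (d : ℕ) (f : EuclideanSpace ℝ (Fin d) → ℝ) (x : EuclideanSpace ℝ (Fin d)) :
    Matrix (Fin d) (Fin d) ℝ :=
  fun i j => fderiv ℝ (fun y => gradient f y i) x (EuclideanSpace.single j (1 : ℝ))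

/-- The Frobenius norm of a matrix. -/
def frobNorm (d : ℕ) (A : Matrix (Fin d) (Fin d) ℝ) : ℝ :=
  Real.sqrt (∑ i, ∑ j, A i j ^ 2)

/-!
Write `Y = X + Z` with `X ∼ ν` and `Z ∼ N(0, v I)` independent; the forward marginal at time `t` is
the law of such a `Y`, where `ν` is the initial law scaled by `m_t` and `v = σ_t²`. Differentiating
the Gaussian convolution twice gives Tweedie's formulas
`∇ log p(y) = -E[y - X | Y = y] / v` and `∇² log p(y) + I / v = Cov(X | Y = y) / v²`.
The Frobenius norm of a covariance matrix is at most its trace (Cauchy–Schwarz entrywise), hence at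
most `E[‖y - X‖² | Y = y]`, and Jensen bounds the fourth power of the latter by
`E[‖y - X‖⁸ | Y = y]`. Averaging over `Y` turns this into `E‖Z‖⁸ = v⁴ E‖N(0, I)‖⁸`.
-/

open ProbabilityTheory InnerProductSpace Module

section GaussianDensity

variable {E : Type*} [NormedAddCommGroup E] [InnerProductSpace ℝ E]

/-- The Lebesgue density of the centred Gaussian `N(0, v I)` on a finite-dimensional inner product
space, parametrised by the variance `v` per coordinate: the law of the noise in the model. -/
def gaussDensity (v : ℝ) (u : E) : ℝ :=
  (2 * π * v) ^ (-(finrank ℝ E : ℝ) / 2) * exp (-‖u‖ ^ 2 / (2 * v))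

lemma gaussDensity_pos {v : ℝ} (hv : 0 < v) (u : E) : 0 < gaussDensity v u := by
  unfold gaussDensity; positivity

@[fun_prop]
lemma continuous_gaussDensity (v : ℝ) : Continuous (gaussDensity v : E → ℝ) := by
  unfold gaussDensity; fun_prop

lemma hasFDerivAt_gaussDensity (v : ℝ) (u : E) :
    HasFDerivAt (gaussDensity v) (gaussDensity v u • -(v⁻¹ • innerSL ℝ u)) u := by
  have hnorm := (hasStrictFDerivAt_norm_sq u).hasFDerivAt
  have h := ((hnorm.neg.mul_const (2 * v)⁻¹).exp).const_mul
    ((2 * π * v) ^ (-(finrank ℝ E : ℝ) / 2))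
  refine h.congr_fderiv ?_
  ext w
  simp only [div_eq_mul_inv, neg_mul, Pi.neg_apply, mul_inv_rev, smul_neg, neg_apply, smul_apply,
    coe_innerSL_apply, nsmul_eq_mul, Nat.cast_ofNat, smul_eq_mul, gaussDensity, neg_inj]
  ring

lemma exists_norm_pow_mul_gaussDensity_le {v : ℝ} (hv : 0 < v) (n : ℕ) :
    ∃ C, ∀ u : E, ‖u‖ ^ n * gaussDensity v u ≤ C := by
  refine ⟨(2 * π * v) ^ (-(finrank ℝ E : ℝ) / 2) * (n.factorial * exp (v / 2)), fun u => ?_⟩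
  have hpow : ‖u‖ ^ n ≤ n.factorial * exp ‖u‖ := by
    rw [← div_le_iff₀' (by positivity)]
    exact pow_div_factorial_le_exp _ (norm_nonneg u) n
  have hexp : exp ‖u‖ * exp (-‖u‖ ^ 2 / (2 * v)) ≤ exp (v / 2) := by
    rw [← exp_add, exp_le_exp, ← sub_nonneg]
    have : v / 2 - (‖u‖ + -‖u‖ ^ 2 / (2 * v)) = (‖u‖ - v) ^ 2 / (2 * v) := by field_simp; ring
    rw [this]
    positivity
  calc ‖u‖ ^ n * gaussDensity v u
      ≤ n.factorial * exp ‖u‖ * gaussDensity v u := by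
        gcongr
        exact (gaussDensity_pos hv u).le
    _ = (2 * π * v) ^ (-(finrank ℝ E : ℝ) / 2) *
          (n.factorial * (exp ‖u‖ * exp (-‖u‖ ^ 2 / (2 * v)))) := by unfold gaussDensity; ring
    _ ≤ _ := by gcongr

lemma gaussDensity_sqrt_smul {v : ℝ} (hv : 0 < v) (z : E) :
    gaussDensity v (√v • z) = (√v ^ finrank ℝ E)⁻¹ * gaussDensity 1 z := by
  have hpow : v ^ (-(finrank ℝ E : ℝ) / 2) = (√v ^ finrank ℝ E)⁻¹ := by
    rw [sqrt_eq_rpow, ← rpow_natCast, ← rpow_mul hv.le, ← rpow_neg hv.le]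
    ring_nf
  have hexp : -‖√v • z‖ ^ 2 / (2 * v) = -‖z‖ ^ 2 / (2 * 1) := by
    rw [norm_smul, mul_pow, norm_of_nonneg (sqrt_nonneg v), sq_sqrt hv.le]
    field_simp
  rw [gaussDensity, gaussDensity, hexp, mul_rpow (by positivity) hv.le, hpow, mul_one (2 * π)]
  ring

variable [FiniteDimensional ℝ E] [MeasurableSpace E] [BorelSpace E]

lemma integral_gaussDensity {v : ℝ} (hv : 0 < v) : ∫ u : E, gaussDensity v u = 1 := by
  have h := GaussianFourier.integral_rexp_neg_mul_sq_norm (V := E) (b := (2 * v)⁻¹) (by positivity)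
  have hexp (u : E) : exp (-‖u‖ ^ 2 / (2 * v)) = exp (-(2 * v)⁻¹ * ‖u‖ ^ 2) := by
    congr 1; ring
  simp only [gaussDensity, integral_const_mul, hexp, h]
  rw [div_inv_eq_mul, show π * (2 * v) = 2 * π * v by ring, ← rpow_add (by positivity), neg_div,
    neg_add_cancel, rpow_zero]

lemma lintegral_gaussDensity {v : ℝ} (hv : 0 < v) :
    ∫⁻ u : E, ENNReal.ofReal (gaussDensity v u) = 1 := by
  have hint : Integrable (gaussDensity v : E → ℝ) :=
    .of_integral_ne_zero (by rw [integral_gaussDensity hv]; exact one_ne_zero)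
  rw [← ofReal_integral_eq_lintegral_ofReal hint (.of_forall fun u => (gaussDensity_pos hv u).le),
    integral_gaussDensity hv, ENNReal.ofReal_one]

lemma lintegral_mul_gaussDensity_eq_lintegral_sqrt_smul {v : ℝ} (hv : 0 < v) {F : E → ℝ≥0∞}
    (hF : Measurable F) :
    ∫⁻ u, F u * ENNReal.ofReal (gaussDensity v u) =
      ∫⁻ z, F (√v • z) * ENNReal.ofReal (gaussDensity 1 z) := by
  have hr : 0 < √v ^ finrank ℝ E := by positivity
  have hmap : (volume : Measure E).map (√v • ·) =
      ENNReal.ofReal (√v ^ finrank ℝ E)⁻¹ • volume := by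
    rw [Measure.map_addHaar_smul _ (by positivity), abs_of_pos (by positivity)]
  have hmap' : (volume : Measure E) =
      ENNReal.ofReal (√v ^ finrank ℝ E) • (volume : Measure E).map (√v • ·) := by
    rw [hmap, smul_smul, ← ENNReal.ofReal_mul hr.le, mul_inv_cancel₀ hr.ne', ENNReal.ofReal_one,
      one_smul]
  conv_lhs => rw [hmap']
  rw [lintegral_smul_measure, lintegral_map (by fun_prop) (by fun_prop), smul_eq_mul,
    ← lintegral_const_mul _ (by fun_prop)]
  congr 1 with z
  rw [gaussDensity_sqrt_smul hv, mul_left_comm, ← ENNReal.ofReal_mul hr.le,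
    mul_inv_cancel_left₀ hr.ne']

end GaussianDensity

lemma stdGaussDensity_eq_gaussDensity_one (d : ℕ) : stdGaussDensity d = gaussDensity 1 := by
  ext x
  simp [stdGaussDensity, gaussDensity]

instance isProbabilityMeasure_stdGaussMeasure (d : ℕ) :
    IsProbabilityMeasure (stdGaussMeasure d) := by
  constructor
  rw [stdGaussMeasure, withDensity_apply _ .univ, Measure.restrict_univ,
    stdGaussDensity_eq_gaussDensity_one, lintegral_gaussDensity one_pos]

lemma lintegral_mul_gaussDensity_eq_lintegral_stdGaussMeasure {d : ℕ} {v : ℝ} (hv : 0 < v)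
    {F : EuclideanSpace ℝ (Fin d) → ℝ≥0∞} (hF : Measurable F) :
    ∫⁻ u, F u * ENNReal.ofReal (gaussDensity v u) = ∫⁻ z, F (√v • z) ∂stdGaussMeasure d := by
  rw [lintegral_mul_gaussDensity_eq_lintegral_sqrt_smul hv hF, stdGaussMeasure,
    stdGaussDensity_eq_gaussDensity_one, lintegral_withDensity_eq_lintegral_mul _ (by fun_prop)
      (by fun_prop)]
  simp only [Pi.mul_apply, mul_comm]

lemma hasFDerivAt_integral_comp_sub {E F : Type*} [NormedAddCommGroup E] [NormedSpace ℝ E]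
    [MeasurableSpace E] [OpensMeasurableSpace E] [SecondCountableTopology E]
    [NormedAddCommGroup F] [NormedSpace ℝ F] {ν : Measure E} [IsFiniteMeasure ν]
    {g : E → F} {g' : E → E →L[ℝ] F} {C C' : ℝ} (hg : ∀ u, HasFDerivAt g (g' u) u)
    (hg' : Continuous g') (hC : ∀ u, ‖g u‖ ≤ C) (hC' : ∀ u, ‖g' u‖ ≤ C') (y : E) :
    HasFDerivAt (fun y => ∫ x, g (y - x) ∂ν) (∫ x, g' (y - x) ∂ν) y := by
  have hcont : Continuous g := continuous_iff_continuousAt.2 fun u => (hg u).continuousAt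
  have hmeas (z : E) : AEStronglyMeasurable (fun x => g (z - x)) ν :=
    (hcont.comp (by fun_prop)).aestronglyMeasurable
  refine hasFDerivAt_integral_of_dominated_of_fderiv_le (F := fun y x => g (y - x))
    (F' := fun y x => g' (y - x)) (bound := fun _ => C') Filter.univ_mem
    (.of_forall hmeas) (.of_bound (hmeas y) C (.of_forall fun x => hC _))
    (hg'.comp (by fun_prop)).aestronglyMeasurable (.of_forall fun x z _ => hC' _)
    (integrable_const C') (.of_forall fun x z _ => ?_)
  exact (hasFDerivAt_comp_sub x).2 (hg (z - x))

lemma continuous_rankOne_self {E : Type*} [NormedAddCommGroup E] [InnerProductSpace ℝ E] :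
    Continuous fun u : E => rankOne ℝ u u := by
  simp only [rankOne_def]
  exact (ContinuousLinearMap.smulRightL ℝ E E).continuous₂.comp
    ((innerSL ℝ).continuous.prodMk continuous_id)

lemma hasFDerivAt_gaussDensity_smul_self {E : Type*} [NormedAddCommGroup E]
    [InnerProductSpace ℝ E] (v : ℝ) (u : E) :
    HasFDerivAt (fun u : E => gaussDensity v u • u)
      (gaussDensity v u • (.id ℝ E - v⁻¹ • rankOne ℝ u u)) u := by
  refine ((hasFDerivAt_gaussDensity v u).smul (hasFDerivAt_id u)).congr_fderiv ?_
  ext1 w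
  simp [rankOne_apply, smul_smul, sub_eq_add_neg]

lemma integrable_rankOne_self {Ω E : Type*} [MeasurableSpace Ω] {P : Measure Ω}
    [NormedAddCommGroup E] [InnerProductSpace ℝ E] {X : Ω → E} (hX : MemLp X 2 P) :
    Integrable (fun ω => rankOne ℝ (X ω) (X ω)) P := by
  refine ((memLp_two_iff_integrable_sq_norm hX.1).1 hX).mono'
    (continuous_rankOne_self.comp_aestronglyMeasurable hX.1) (.of_forall fun ω => ?_)
  rw [norm_rankOne, sq]

section Posterior

variable {E F : Type*} [NormedAddCommGroup E] [InnerProductSpace ℝ E] [MeasurableSpace E]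
  [NormedAddCommGroup F] [NormedSpace ℝ F] {v : ℝ} {ν : Measure E}

/-- The Lebesgue density of `ν ∗ N(0, v I)`, the law of a sum `X + Z` of independent random vectors
with `X ∼ ν` and `Z ∼ N(0, v I)`. -/
def gaussConv (v : ℝ) (ν : Measure E) (y : E) : ℝ :=
  ∫ x, gaussDensity v (y - x) ∂ν

/-- The conditional law of `X` given `X + Z = y`, where `X ∼ ν` and `Z ∼ N(0, v I)` are independent:
the probability measure with density proportional to `x ↦ gaussDensity v (y - x)` with respect to
`ν`. It is encoded as an exponential tilt of `ν`. -/
def gaussPosterior (v : ℝ) (ν : Measure E) (y : E) : Measure E :=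
  ν.tilted fun x => log (gaussDensity v (y - x))

lemma integral_gaussPosterior (hv : 0 < v) (y : E) (f : E → F) :
    ∫ x, f x ∂gaussPosterior v ν y =
      (gaussConv v ν y)⁻¹ • ∫ x, gaussDensity v (y - x) • f x ∂ν := by
  simp only [gaussPosterior, integral_tilted, exp_log (gaussDensity_pos hv _), gaussConv,
    div_eq_inv_mul, mul_smul, integral_smul]

instance isZeroOrProbabilityMeasure_gaussPosterior (y : E) :
    IsZeroOrProbabilityMeasure (gaussPosterior v ν y) :=
  inferInstanceAs (IsZeroOrProbabilityMeasure (ν.tilted _))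

variable [BorelSpace E] [SecondCountableTopology E] [IsFiniteMeasure ν]

lemma integrable_norm_pow_mul_gaussDensity (hv : 0 < v) (n : ℕ) (y : E) :
    Integrable (fun x => ‖y - x‖ ^ n * gaussDensity v (y - x)) ν := by
  obtain ⟨C, hC⟩ := exists_norm_pow_mul_gaussDensity_le (E := E) hv n
  refine .of_bound (by fun_prop) C (.of_forall fun x => ?_)
  rw [norm_of_nonneg (mul_nonneg (by positivity) (gaussDensity_pos hv _).le)]
  exact hC _

lemma integrable_gaussDensity_sub (hv : 0 < v) (y : E) :
    Integrable (fun x => gaussDensity v (y - x)) ν := by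
  simpa using integrable_norm_pow_mul_gaussDensity hv 0 y

lemma gaussConv_pos [NeZero ν] (hv : 0 < v) (y : E) : 0 < gaussConv v ν y := by
  have h := integral_exp_pos (μ := ν) (f := fun x => log (gaussDensity v (y - x)))
  simp only [exp_log (gaussDensity_pos hv _)] at h
  exact h (integrable_gaussDensity_sub hv y)

lemma integral_gaussDensity_smul [NeZero ν] (hv : 0 < v) (y : E) (f : E → F) :
    ∫ x, gaussDensity v (y - x) • f x ∂ν =
      gaussConv v ν y • ∫ x, f x ∂gaussPosterior v ν y := by
  rw [integral_gaussPosterior hv, smul_inv_smul₀ (gaussConv_pos hv y).ne']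

lemma isProbabilityMeasure_gaussPosterior [NeZero ν] (hv : 0 < v) (y : E) :
    IsProbabilityMeasure (gaussPosterior v ν y) := by
  refine isProbabilityMeasure_tilted ?_
  simpa only [exp_log (gaussDensity_pos hv _)] using integrable_gaussDensity_sub hv y

lemma integrable_norm_sub_pow_gaussPosterior (hv : 0 < v) (n : ℕ) (y : E) :
    Integrable (fun x => ‖y - x‖ ^ n) (gaussPosterior v ν y) := by
  rw [gaussPosterior, integrable_tilted_iff] <;> simp only [exp_log (gaussDensity_pos hv _)]
  · simpa only [smul_eq_mul, mul_comm] using integrable_norm_pow_mul_gaussDensity hv n y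
  · exact integrable_gaussDensity_sub hv y

lemma memLp_sub_gaussPosterior (hv : 0 < v) (y : E) :
    MemLp (fun x => y - x) 2 (gaussPosterior v ν y) :=
  (memLp_two_iff_integrable_sq_norm (by fun_prop)).2 <|
    integrable_norm_sub_pow_gaussPosterior hv 2 y

lemma memLp_id_gaussPosterior (hv : 0 < v) (y : E) : MemLp id 2 (gaussPosterior v ν y) := by
  have hsub := (memLp_const y).sub (memLp_sub_gaussPosterior (ν := ν) hv y)
  simpa only [Pi.sub_def, sub_sub_cancel, Function.id_def] using hsub

lemma integrable_sub_gaussPosterior (hv : 0 < v) (y : E) :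
    Integrable (fun x => y - x) (gaussPosterior v ν y) :=
  (memLp_sub_gaussPosterior hv y).integrable one_le_two

end Posterior

section Tweedie

variable {E : Type*} [NormedAddCommGroup E] [InnerProductSpace ℝ E] [FiniteDimensional ℝ E]
  [MeasurableSpace E] [BorelSpace E] {v : ℝ} {ν : Measure E} [IsFiniteMeasure ν] [NeZero ν]

lemma hasFDerivAt_gaussConv (hv : 0 < v) (y : E) :
    HasFDerivAt (gaussConv v ν)
      (gaussConv v ν y • -(v⁻¹ • innerSL ℝ (∫ x, (y - x) ∂gaussPosterior v ν y))) y := by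
  obtain ⟨C₀, hC₀⟩ := exists_norm_pow_mul_gaussDensity_le (E := E) hv 0
  obtain ⟨C₁, hC₁⟩ := exists_norm_pow_mul_gaussDensity_le (E := E) hv 1
  have hpos := gaussDensity_pos (E := E) hv
  refine (hasFDerivAt_integral_comp_sub (C := C₀) (C' := v⁻¹ * C₁) (hasFDerivAt_gaussDensity v)
    (by fun_prop) (fun u => ?_) (fun u => ?_) y).congr_fderiv ?_
  · simpa [abs_of_pos (hpos u)] using hC₀ u
  · rw [norm_smul, norm_neg, norm_smul, norm_inv, norm_of_nonneg hv.le,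
      norm_of_nonneg (hpos u).le, innerSL_apply_norm, mul_left_comm, mul_comm (gaussDensity v u)]
    gcongr
    simpa using hC₁ u
  · rw [integral_gaussDensity_smul hv, integral_neg, integral_smul,
      (innerSL ℝ).integral_comp_comm (integrable_sub_gaussPosterior hv y)]

lemma hasFDerivAt_integral_gaussDensity_smul_sub (hv : 0 < v) (y : E) :
    HasFDerivAt (fun y => ∫ x, gaussDensity v (y - x) • (y - x) ∂ν)
      (gaussConv v ν y • (.id ℝ E -
        v⁻¹ • ∫ x, rankOne ℝ (y - x) (y - x) ∂gaussPosterior v ν y)) y := by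
  obtain ⟨C₀, hC₀⟩ := exists_norm_pow_mul_gaussDensity_le (E := E) hv 0
  obtain ⟨C₁, hC₁⟩ := exists_norm_pow_mul_gaussDensity_le (E := E) hv 1
  obtain ⟨C₂, hC₂⟩ := exists_norm_pow_mul_gaussDensity_le (E := E) hv 2
  have hpos := gaussDensity_pos (E := E) hv
  have hcont : Continuous fun u : E => gaussDensity v u • (.id ℝ E - v⁻¹ • rankOne ℝ u u) :=
    (continuous_gaussDensity v).smul
      (continuous_const.sub (continuous_rankOne_self.const_smul v⁻¹))
  refine (hasFDerivAt_integral_comp_sub (C := C₁) (C' := C₀ + v⁻¹ * C₂)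
    (hasFDerivAt_gaussDensity_smul_self v) hcont (fun u => ?_) (fun u => ?_) y).congr_fderiv ?_
  · simpa [norm_smul, abs_of_pos (hpos u), mul_comm] using hC₁ u
  · calc ‖gaussDensity v u • (.id ℝ E - v⁻¹ • rankOne ℝ u u)‖
        ≤ gaussDensity v u * (1 + v⁻¹ * ‖u‖ ^ 2) := by
          rw [norm_smul, norm_of_nonneg (hpos u).le]
          gcongr
          · exact (hpos u).le
          refine (norm_sub_le _ _).trans (add_le_add ContinuousLinearMap.norm_id_le ?_)
          rw [norm_smul, norm_rankOne, norm_inv, norm_of_nonneg hv.le, sq]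
      _ = ‖u‖ ^ 0 * gaussDensity v u + v⁻¹ * (‖u‖ ^ 2 * gaussDensity v u) := by ring
      _ ≤ C₀ + v⁻¹ * C₂ := by
          gcongr
          exacts [hC₀ u, hC₂ u]
  · have := isProbabilityMeasure_gaussPosterior (ν := ν) hv y
    have hint := (integrable_rankOne_self (memLp_sub_gaussPosterior (ν := ν) hv y)).smul v⁻¹
    rw [integral_gaussDensity_smul hv,
      integral_sub (g := fun x => v⁻¹ • rankOne ℝ (y - x) (y - x)) (integrable_const _) hint,
      integral_const, probReal_univ, one_smul, integral_smul]

lemma hasFDerivAt_integral_sub_gaussPosterior (hv : 0 < v) (y : E) :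
    HasFDerivAt (fun y => ∫ x, (y - x) ∂gaussPosterior v ν y)
      (.id ℝ E - v⁻¹ • (∫ x, rankOne ℝ (y - x) (y - x) ∂gaussPosterior v ν y -
        rankOne ℝ (∫ x, (y - x) ∂gaussPosterior v ν y)
          (∫ x, (y - x) ∂gaussPosterior v ν y))) y := by
  have hp := (gaussConv_pos (ν := ν) hv y).ne'
  have h := ((hasDerivAt_inv hp).comp_hasFDerivAt y (hasFDerivAt_gaussConv (ν := ν) hv y)).smul
    (hasFDerivAt_integral_gaussDensity_smul_sub (ν := ν) hv y)
  refine (h.congr_fderiv ?_).congr_of_eventuallyEq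
    (.of_forall fun z => integral_gaussPosterior hv z _)
  rw [integral_gaussDensity_smul hv]
  ext1 w
  simp only [Function.comp_apply, map_sub, sub_apply, smul_smul, smul_neg, neg_mul, neg_smul,
    neg_neg, add_apply, smul_apply, ContinuousLinearMap.id_apply,
    ContinuousLinearMap.smulRight_apply, coe_innerSL_apply, smul_eq_mul, rankOne_apply]
  field_simp
  module

lemma gradient_log_gaussConv (hv : 0 < v) (y : E) :
    gradient (fun y => log (gaussConv v ν y)) y =
      -(v⁻¹ • ∫ x, (y - x) ∂gaussPosterior v ν y) := by
  refine HasGradientAt.gradient (hasGradientAt_iff_hasFDerivAt.2 ?_)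
  have hp := (gaussConv_pos (ν := ν) hv y).ne'
  refine ((hasFDerivAt_gaussConv hv y).log hp).congr_fderiv ?_
  rw [inv_smul_smul₀ hp, map_neg, map_smul]
  rfl

end Tweedie

section Covariance

variable {Ω : Type*} [MeasurableSpace Ω] {P : Measure Ω}

lemma covariance_sq_le_variance_mul_variance [IsFiniteMeasure P] {X Y : Ω → ℝ} (hX : MemLp X 2 P)
    (hY : MemLp Y 2 P) : cov[X, Y; P] ^ 2 ≤ Var[X; P] * Var[Y; P] := by
  have hquad (s : ℝ) : 0 ≤ Var[X; P] * (s * s) + 2 * cov[X, Y; P] * s + Var[Y; P] := by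
    have h := variance_nonneg (s • X + Y) P
    rw [variance_add (hX.const_smul s) hY, variance_smul, covariance_smul_left] at h
    linarith
  have := discrim_le_zero hquad
  rw [discrim] at this
  linarith

variable {d : ℕ}

/-- The covariance matrix of a measure `μ` on `ℝ^d` in the standard basis; for the posterior it is
`∇² log` of the convolution up to scaling and a multiple of the identity. -/
def covMatrix (μ : Measure (EuclideanSpace ℝ (Fin d))) : Matrix (Fin d) (Fin d) ℝ :=
  .of fun i j => cov[fun x => x i, fun x => x j; μ]

variable {μ : Measure (EuclideanSpace ℝ (Fin d))}

lemma memLp_coord (hμ : MemLp id 2 μ) (i : Fin d) : MemLp (fun x => x i) 2 μ :=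
  (EuclideanSpace.proj (𝕜 := ℝ) i).comp_memLp' hμ

lemma variance_apply_le [IsProbabilityMeasure μ] (a : EuclideanSpace ℝ (Fin d)) (i : Fin d) :
    Var[fun x => x i; μ] ≤ ∫ x, (a i - x i) ^ 2 ∂μ := by
  rw [← variance_const_sub (X := fun x : EuclideanSpace ℝ (Fin d) => x i) (by fun_prop) (a i)]
  exact variance_le_expectation_sq (by fun_prop)

lemma frobNorm_covMatrix_le_sum_variance [IsFiniteMeasure μ] (hμ : MemLp id 2 μ) :
    frobNorm d (covMatrix μ) ≤ ∑ i, Var[fun x => x i; μ] := by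
  rw [frobNorm, sqrt_le_iff, sq, Finset.sum_mul_sum]
  refine ⟨Finset.sum_nonneg fun i _ => variance_nonneg _ _, ?_⟩
  gcongr with i _ j _
  exact covariance_sq_le_variance_mul_variance (memLp_coord hμ i) (memLp_coord hμ j)

lemma frobNorm_covMatrix_le [IsProbabilityMeasure μ] (hμ : MemLp id 2 μ)
    (a : EuclideanSpace ℝ (Fin d)) : frobNorm d (covMatrix μ) ≤ ∫ x, ‖a - x‖ ^ 2 ∂μ := by
  have hint (i : Fin d) : Integrable (fun x => (a i - x i) ^ 2) μ :=
    ((memLp_const (a i)).sub (memLp_coord hμ i)).integrable_sq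
  calc frobNorm d (covMatrix μ)
      ≤ ∑ i, Var[fun x => x i; μ] := frobNorm_covMatrix_le_sum_variance hμ
    _ ≤ ∑ i, ∫ x, (a i - x i) ^ 2 ∂μ := by gcongr with i; exact variance_apply_le a i
    _ = ∫ x, ‖a - x‖ ^ 2 ∂μ := by
      rw [← integral_finsetSum _ fun i _ => hint i]
      simp [EuclideanSpace.real_norm_sq_eq]

lemma covMatrix_apply_eq_integral_rankOne_sub [IsProbabilityMeasure μ] (hμ : MemLp id 2 μ)
    (y : EuclideanSpace ℝ (Fin d)) (i j : Fin d) :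
    covMatrix μ i j = (∫ x, rankOne ℝ (y - x) (y - x) ∂μ -
      rankOne ℝ (∫ x, (y - x) ∂μ) (∫ x, (y - x) ∂μ)) (EuclideanSpace.single j 1) i := by
  have hsub : MemLp (fun x => y - x) 2 μ := (memLp_const y).sub hμ
  have hcoord (k : Fin d) : MemLp (fun x => y k - x k) 2 μ :=
    (memLp_const (y k)).sub (memLp_coord hμ k)
  have hrank := integrable_rankOne_self hsub
  have hmean (k : Fin d) : (∫ x, (y - x) ∂μ) k = ∫ x, (y k - x k) ∂μ :=
    ((EuclideanSpace.proj (𝕜 := ℝ) k).integral_comp_comm (hsub.integrable one_le_two)).symm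
  have hsecond : (∫ x, rankOne ℝ (y - x) (y - x) ∂μ) (EuclideanSpace.single j 1) i =
      ∫ x, (y i - x i) * (y j - x j) ∂μ := by
    rw [ContinuousLinearMap.integral_apply hrank]
    refine ((EuclideanSpace.proj (𝕜 := ℝ) i).integral_comp_comm
      (hrank.apply_continuousLinearMap _)).symm.trans (integral_congr_ae (.of_forall fun x => ?_))
    simp only [rankOne_apply, EuclideanSpace.inner_single_right]
    simp [mul_comm]
  have hint (k : Fin d) : Integrable (fun x => x k) μ := (memLp_coord hμ k).integrable one_le_two
  have hcov : covMatrix μ i j = cov[fun x => y i - x i, fun x => y j - x j; μ] := by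
    rw [covariance_const_sub_left (hint i), covariance_const_sub_right (hint j), neg_neg]
    rfl
  rw [hcov, covariance_eq_sub (hcoord i) (hcoord j), sub_apply, PiLp.sub_apply, hsecond]
  simp [rankOne_apply, EuclideanSpace.inner_single_right, hmean, mul_comm]

end Covariance

section FrobeniusNorm

open scoped Matrix.Norms.Frobenius

variable {d : ℕ}

lemma frobNorm_eq_norm (A : Matrix (Fin d) (Fin d) ℝ) : frobNorm d A = ‖A‖ := by
  simp [frobNorm, Matrix.frobenius_norm_def, sqrt_eq_rpow]

lemma frobNorm_smul_add_smul_one_le (a b : ℝ) (A : Matrix (Fin d) (Fin d) ℝ) :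
    frobNorm d (a • A + b • 1) ≤ |a| * frobNorm d A + |b| * √d := by
  have hone : frobNorm d 1 = √d := by simp [frobNorm, Matrix.one_apply]
  rw [← hone]
  simp only [frobNorm_eq_norm, ← norm_eq_abs, ← norm_smul]
  exact norm_add_le _ _

end FrobeniusNorm

section Hessian

variable {d : ℕ}

lemma hessMatrix_apply_of_hasFDerivAt_gradient {f : EuclideanSpace ℝ (Fin d) → ℝ}
    {L : EuclideanSpace ℝ (Fin d) →L[ℝ] EuclideanSpace ℝ (Fin d)} {x : EuclideanSpace ℝ (Fin d)}
    (h : HasFDerivAt (gradient f) L x) (i j : Fin d) :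
    hessMatrix d f x i j = L (EuclideanSpace.single j 1) i := by
  have hi := (EuclideanSpace.proj (𝕜 := ℝ) i).hasFDerivAt.comp x h
  exact congr($(hi.fderiv) (EuclideanSpace.single j 1))

lemma hessMatrix_log_gaussConv {v : ℝ} (hv : 0 < v) (ν : Measure (EuclideanSpace ℝ (Fin d)))
    [IsFiniteMeasure ν] [NeZero ν] (y : EuclideanSpace ℝ (Fin d)) :
    hessMatrix d (fun y => log (gaussConv v ν y)) y =
      (v ^ 2)⁻¹ • covMatrix (gaussPosterior v ν y) - v⁻¹ • 1 := by
  have := isProbabilityMeasure_gaussPosterior (ν := ν) hv y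
  have h : HasFDerivAt (gradient fun y => log (gaussConv v ν y)) _ y :=
    ((hasFDerivAt_integral_sub_gaussPosterior hv y).const_smul v⁻¹).neg.congr_of_eventuallyEq
      (.of_forall (gradient_log_gaussConv hv))
  ext i j
  rw [hessMatrix_apply_of_hasFDerivAt_gradient h, Matrix.sub_apply, Matrix.smul_apply,
    covMatrix_apply_eq_integral_rankOne_sub (memLp_id_gaussPosterior hv y) y]
  simp only [neg_apply, smul_apply, sub_apply, ContinuousLinearMap.id_apply, PiLp.neg_apply,
    PiLp.smul_apply, PiLp.sub_apply, smul_eq_mul, PiLp.single_apply, Matrix.smul_apply,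
    Matrix.one_apply]
  ring

end Hessian

section Averaging

lemma ofReal_gaussConv_mul_lintegral_gaussPosterior {E : Type*} [NormedAddCommGroup E]
    [InnerProductSpace ℝ E] [MeasurableSpace E] [BorelSpace E] [SecondCountableTopology E]
    {v : ℝ} {ν : Measure E} [IsFiniteMeasure ν] [NeZero ν] (hv : 0 < v) (F : E → ℝ≥0∞) (y : E) :
    ENNReal.ofReal (gaussConv v ν y) * ∫⁻ x, F x ∂gaussPosterior v ν y =
      ∫⁻ x, F x * ENNReal.ofReal (gaussDensity v (y - x)) ∂ν := by
  have hp := gaussConv_pos (ν := ν) hv y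
  rw [gaussPosterior, lintegral_tilted, ← lintegral_const_mul' _ _ ENNReal.ofReal_ne_top]
  congr 1 with x
  rw [← mul_assoc, ← ENNReal.ofReal_mul hp.le]
  simp only [exp_log (gaussDensity_pos hv _)]
  rw [← gaussConv, mul_div_cancel₀ _ hp.ne', mul_comm]

variable {E : Type*} [NormedAddCommGroup E] [InnerProductSpace ℝ E] [FiniteDimensional ℝ E]
  [MeasurableSpace E] [BorelSpace E]

lemma lintegral_gaussConv_mul_lintegral_gaussPosterior_sub {v : ℝ} (hv : 0 < v) (ν : Measure E)
    [IsProbabilityMeasure ν] {F : E → ℝ≥0∞} (hF : Measurable F) :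
    ∫⁻ y, ENNReal.ofReal (gaussConv v ν y) * ∫⁻ x, F (y - x) ∂gaussPosterior v ν y =
      ∫⁻ u, F u * ENNReal.ofReal (gaussDensity v u) := by
  rw [lintegral_congr fun y => ofReal_gaussConv_mul_lintegral_gaussPosterior hv _ y,
    lintegral_lintegral_swap (by fun_prop),
    lintegral_congr fun x => lintegral_sub_right_eq_self
      (fun u => F u * ENNReal.ofReal (gaussDensity v u)) x,
    lintegral_const, measure_univ, mul_one]

end Averaging

lemma pow_integral_le_integral_pow {Ω : Type*} [MeasurableSpace Ω] {P : Measure Ω}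
    [IsProbabilityMeasure P] {f : Ω → ℝ} (n : ℕ) (hf : 0 ≤ᵐ[P] f) (hint : Integrable f P)
    (hpow : Integrable (fun ω => f ω ^ n) P) : (∫ ω, f ω ∂P) ^ n ≤ ∫ ω, f ω ^ n ∂P :=
  (convexOn_pow (𝕜 := ℝ) n).map_integral_le (by fun_prop) isClosed_Ici hf hint hpow

lemma lintegral_norm_pow_eight_add_mul_gaussDensity_le {d : ℕ} {v c : ℝ} (hv : 0 < v)
    (hc : 1 / v ^ 4 ≤ c) :
    ∫⁻ u : EuclideanSpace ℝ (Fin d), ENNReal.ofReal (8 / v ^ 8 * ‖u‖ ^ 8 + 64 * c * d ^ 2) *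
        ENNReal.ofReal (gaussDensity v u) ≤
      ENNReal.ofReal 64 * ENNReal.ofReal c *
        ((∫⁻ z, ENNReal.ofReal (‖z‖ ^ 8) ∂stdGaussMeasure d) + (d : ℝ≥0∞) ^ 4) := by
  have hc0 : 0 ≤ c := le_trans (by positivity) hc
  have hd : (d : ℝ) ^ 2 ≤ d ^ 4 := by
    obtain rfl | hd := d.eq_zero_or_pos
    · simp
    · exact_mod_cast Nat.pow_le_pow_right hd (by norm_num)
  have hscale (z : EuclideanSpace ℝ (Fin d)) :
      8 / v ^ 8 * ‖√v • z‖ ^ 8 = 8 * (1 / v ^ 4) * ‖z‖ ^ 8 := by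
    have hv4 : √v ^ 8 = v ^ 4 := by rw [show 8 = 2 * 4 by norm_num, pow_mul, sq_sqrt hv.le]
    rw [norm_smul, norm_of_nonneg (sqrt_nonneg v), mul_pow, hv4]
    field_simp
  calc _ = ∫⁻ z, ENNReal.ofReal (8 * (1 / v ^ 4) * ‖z‖ ^ 8 + 64 * c * d ^ 2)
          ∂stdGaussMeasure d := by
        rw [lintegral_mul_gaussDensity_eq_lintegral_stdGaussMeasure hv (by fun_prop)]
        simp only [hscale]
    _ ≤ ∫⁻ z, ENNReal.ofReal (64 * c * (‖z‖ ^ 8 + d ^ 4)) ∂stdGaussMeasure d := by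
        gcongr with z
        rw [mul_add]
        gcongr
        norm_num
    _ = _ := by
        simp only [ENNReal.ofReal_mul (show 0 ≤ 64 * c by positivity),
          ENNReal.ofReal_mul (show (0 : ℝ) ≤ 64 by norm_num),
          ENNReal.ofReal_add (pow_nonneg (norm_nonneg _) 8) (show (0 : ℝ) ≤ d ^ 4 by positivity)]
        rw [lintegral_const_mul _ (by fun_prop), lintegral_add_right _ measurable_const,
          lintegral_const, measure_univ, mul_one, ENNReal.ofReal_pow d.cast_nonneg,
          ENNReal.ofReal_natCast]

section MomentBound

variable {d : ℕ} {v : ℝ} (ν : Measure (EuclideanSpace ℝ (Fin d)))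

lemma frobNorm_hessMatrix_log_gaussConv_add_le [IsFiniteMeasure ν] [NeZero ν] (hv : 0 < v)
    (τ : ℝ) (y : EuclideanSpace ℝ (Fin d)) :
    frobNorm d (hessMatrix d (fun y => log (gaussConv v ν y)) y + τ • 1) ≤
      (v ^ 2)⁻¹ * ∫ x, ‖y - x‖ ^ 2 ∂gaussPosterior v ν y + |τ - v⁻¹| * √d := by
  have := isProbabilityMeasure_gaussPosterior (ν := ν) hv y
  rw [hessMatrix_log_gaussConv hv, sub_add_eq_add_sub, add_sub_assoc, ← sub_smul]
  refine (frobNorm_smul_add_smul_one_le _ _ _).trans ?_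
  rw [abs_of_pos (by positivity)]
  gcongr
  exact frobNorm_covMatrix_le (memLp_id_gaussPosterior hv y) y

lemma abs_sub_inv_pow_four_le (hv : 0 < v) (τ : ℝ) :
    |τ - v⁻¹| ^ 4 ≤ 8 * (1 / v ^ 4 + τ ^ 4) := by
  have habs : |τ - v⁻¹| ≤ v⁻¹ + |τ| := by
    simpa [abs_of_pos hv, add_comm] using abs_sub τ v⁻¹
  calc |τ - v⁻¹| ^ 4 ≤ (v⁻¹ + |τ|) ^ 4 := by gcongr
    _ ≤ 2 ^ (4 - 1) * (v⁻¹ ^ 4 + |τ| ^ 4) := add_pow_le (by positivity) (abs_nonneg τ) 4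
    _ = 8 * (1 / v ^ 4 + τ ^ 4) := by rw [Even.pow_abs (by decide), one_div, inv_pow]; norm_num

lemma frobNorm_hessMatrix_log_gaussConv_add_pow_four_le [IsFiniteMeasure ν] [NeZero ν]
    (hv : 0 < v) (τ : ℝ) (y : EuclideanSpace ℝ (Fin d)) :
    frobNorm d (hessMatrix d (fun y => log (gaussConv v ν y)) y + τ • 1) ^ 4 ≤
      ∫ x, (8 / v ^ 8 * ‖y - x‖ ^ 8 + 64 * (1 / v ^ 4 + τ ^ 4) * d ^ 2) ∂gaussPosterior v ν y := by
  have := isProbabilityMeasure_gaussPosterior (ν := ν) hv y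
  set m := ∫ x, ‖y - x‖ ^ 2 ∂gaussPosterior v ν y
  have hm0 : 0 ≤ m := integral_nonneg fun x => by positivity
  have hτ := abs_sub_inv_pow_four_le hv τ
  have hJensen : m ^ 4 ≤ ∫ x, ‖y - x‖ ^ 8 ∂gaussPosterior v ν y := by
    have h8 := integrable_norm_sub_pow_gaussPosterior (ν := ν) hv 8 y
    have h := pow_integral_le_integral_pow 4 (.of_forall fun x => sq_nonneg ‖y - x‖)
      (integrable_norm_sub_pow_gaussPosterior (ν := ν) hv 2 y)
    simp only [← pow_mul] at h
    exact h h8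
  have hd : √(d : ℝ) ^ 4 = d ^ 2 := by
    rw [show 4 = 2 * 2 by norm_num, pow_mul, sq_sqrt d.cast_nonneg]
  calc frobNorm d (hessMatrix d (fun y => log (gaussConv v ν y)) y + τ • 1) ^ 4
      ≤ ((v ^ 2)⁻¹ * m + |τ - v⁻¹| * √d) ^ 4 := by
        gcongr
        · exact sqrt_nonneg _
        · exact frobNorm_hessMatrix_log_gaussConv_add_le ν hv τ y
    _ ≤ 2 ^ (4 - 1) * (((v ^ 2)⁻¹ * m) ^ 4 + (|τ - v⁻¹| * √d) ^ 4) :=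
        add_pow_le (mul_nonneg (by positivity) hm0) (by positivity) 4
    _ = 8 / v ^ 8 * m ^ 4 + 8 * |τ - v⁻¹| ^ 4 * d ^ 2 := by rw [mul_pow _ (√_), hd]; ring
    _ ≤ 8 / v ^ 8 * ∫ x, ‖y - x‖ ^ 8 ∂gaussPosterior v ν y +
          8 * (8 * (1 / v ^ 4 + τ ^ 4)) * d ^ 2 := by
        gcongr
    _ = _ := by
        rw [integral_add ((integrable_norm_sub_pow_gaussPosterior hv 8 y).const_mul _)
          (integrable_const _), integral_const_mul, integral_const, probReal_univ, one_smul]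
        ring

theorem lintegral_frobNorm_hessMatrix_log_gaussConv_le [IsProbabilityMeasure ν] (hv : 0 < v)
    (τ : ℝ) :
    ∫⁻ y, ENNReal.ofReal
        (frobNorm d (hessMatrix d (fun y => log (gaussConv v ν y)) y + τ • 1) ^ 4 *
          gaussConv v ν y) ≤
      ENNReal.ofReal 64 * ENNReal.ofReal (1 / v ^ 4 + τ ^ 4) *
        ((∫⁻ z, ENNReal.ofReal (‖z‖ ^ 8) ∂stdGaussMeasure d) + (d : ℝ≥0∞) ^ 4) := by
  let F (u : EuclideanSpace ℝ (Fin d)) : ℝ :=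
    8 / v ^ 8 * ‖u‖ ^ 8 + 64 * (1 / v ^ 4 + τ ^ 4) * d ^ 2
  have hint (y) : Integrable (fun x => F (y - x)) (gaussPosterior v ν y) :=
    ((integrable_norm_sub_pow_gaussPosterior hv 8 y).const_mul _).add (integrable_const _)
  calc ∫⁻ y, ENNReal.ofReal
        (frobNorm d (hessMatrix d (fun y => log (gaussConv v ν y)) y + τ • 1) ^ 4 *
          gaussConv v ν y)
      ≤ ∫⁻ y, ENNReal.ofReal (gaussConv v ν y) *
          ∫⁻ x, ENNReal.ofReal (F (y - x)) ∂gaussPosterior v ν y := by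
        gcongr with y
        rw [mul_comm, ENNReal.ofReal_mul (gaussConv_pos hv y).le,
          ← ofReal_integral_eq_lintegral_ofReal (hint y) (.of_forall fun x => by positivity)]
        gcongr
        exact frobNorm_hessMatrix_log_gaussConv_add_pow_four_le ν hv τ y
    _ = ∫⁻ u, ENNReal.ofReal (F u) * ENNReal.ofReal (gaussDensity v u) :=
        lintegral_gaussConv_mul_lintegral_gaussPosterior_sub hv ν
          (F := fun u => ENNReal.ofReal (F u)) (by fun_prop)
    _ ≤ _ := lintegral_norm_pow_eight_add_mul_gaussDensity_le hv
        (le_add_of_nonneg_right (by positivity))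

end MomentBound

section ForwardMarginal

lemma isProbabilityMeasure_withDensity_ofReal {α : Type*} [MeasurableSpace α] {μ : Measure α}
    {f : α → ℝ} (hf : 0 ≤ᵐ[μ] f) (hf1 : ∫ x, f x ∂μ = 1) :
    IsProbabilityMeasure (μ.withDensity fun x => ENNReal.ofReal (f x)) := by
  have hint : Integrable f μ := .of_integral_ne_zero (hf1 ▸ one_ne_zero)
  constructor
  rw [withDensity_apply _ .univ, Measure.restrict_univ,
    ← ofReal_integral_eq_lintegral_ofReal hint hf, hf1, ENNReal.ofReal_one]

lemma scoef_pos {σ2 t : ℝ} {β : ℝ → ℝ} (hσ : 0 < σ2) (hβ : 0 < ∫ s in (0 : ℝ)..t, β s) :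
    0 < scoef σ2 β t := by
  have hm : mcoef σ2 β t < 1 := exp_lt_one_iff.2 (mul_neg_of_neg_of_pos (by simpa using hσ) hβ)
  have hm2 : mcoef σ2 β t ^ 2 < 1 := pow_lt_one₀ (exp_nonneg _) hm two_ne_zero
  exact sqrt_pos.2 (mul_pos hσ (sub_pos.2 hm2))

lemma forwardDensity_eq_gaussConv {d : ℕ} {p0 : EuclideanSpace ℝ (Fin d) → ℝ}
    (hp0 : 0 ≤ᵐ[volume] p0) (hmeas : AEMeasurable p0) (σ2 : ℝ) (β : ℝ → ℝ) (t : ℝ) :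
    forwardDensity d σ2 β p0 t = gaussConv (scoef σ2 β t ^ 2)
      ((volume.withDensity fun x => ENNReal.ofReal (p0 x)).map (mcoef σ2 β t • ·)) := by
  ext y
  rw [gaussConv, integral_map (by fun_prop) (by fun_prop),
    integral_withDensity_eq_integral_toReal_smul₀ (by fun_prop) (by simp)]
  refine integral_congr_ae (hp0.mono fun x hx => ?_)
  simp only [gaussDensity, finrank_euclideanSpace_fin, ENNReal.toReal_ofReal hx, smul_eq_mul,
    mul_comm]

end ForwardMarginal

theorem hessian_fourth_moment_bound_general {d : ℕ} {σ t : ℝ} {β : ℝ → ℝ} (hσ : 0 < σ)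
    (hβ : 0 < ∫ s in (0 : ℝ)..t, β s) {p0 : EuclideanSpace ℝ (Fin d) → ℝ}
    (hp0 : 0 ≤ᵐ[volume] p0) (hp1 : ∫ x, p0 x = 1) :
    ∫⁻ x, ENNReal.ofReal
        (frobNorm d
            (hessMatrix d (fun y => log (forwardDensity d (σ ^ 2) β p0 t y)) x +
              (1 / σ ^ 2) • (1 : Matrix (Fin d) (Fin d) ℝ)) ^ 4 *
          forwardDensity d (σ ^ 2) β p0 t x) ≤
      ENNReal.ofReal 64 * ENNReal.ofReal (1 / scoef (σ ^ 2) β t ^ 8 + 1 / σ ^ 8) *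
        ((∫⁻ z, ENNReal.ofReal (‖z‖ ^ 8) ∂stdGaussMeasure d) + (d : ℝ≥0∞) ^ 4) := by
  have hint : Integrable p0 := .of_integral_ne_zero (hp1 ▸ one_ne_zero)
  have hs := scoef_pos (pow_pos hσ 2) hβ
  let μ : Measure (EuclideanSpace ℝ (Fin d)) := volume.withDensity fun x => ENNReal.ofReal (p0 x)
  have : IsProbabilityMeasure μ := isProbabilityMeasure_withDensity_ofReal hp0 hp1
  have : IsProbabilityMeasure (μ.map (mcoef (σ ^ 2) β t • ·)) :=
    Measure.isProbabilityMeasure_map (by fun_prop)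
  have h := lintegral_frobNorm_hessMatrix_log_gaussConv_le (μ.map (mcoef (σ ^ 2) β t • ·))
    (pow_pos hs 2) (1 / σ ^ 2)
  rw [← forwardDensity_eq_gaussConv hp0 hint.aemeasurable] at h
  simpa only [div_pow, one_pow, ← pow_mul] using h

/-- a universal fourth-moment bound for the Frobenius norm of the modified
Hessian `∇² log p_t + σ⁻² I_d`:
`∫ ‖∇² log p_t + σ⁻²I‖_Fr⁴ p_t ≤ C (σ_t⁻⁸ + σ⁻⁸)(∫‖z‖⁸ dγ_d + d⁴)`. -/
theorem hessian_fourth_moment_bound :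
    ∃ C : ℝ, 0 < C ∧
      ∀ (d : ℕ), 1 ≤ d → ∀ (σ T : ℝ), 0 < σ → 0 < T →
        ∀ β : ℝ → ℝ, ContinuousOn β (Icc 0 T) → (∀ s ∈ Icc (0:ℝ) T, 0 < β s) →
          MonotoneOn β (Icc 0 T) →
        ∀ t ∈ Ioc (0:ℝ) T,
        ∀ p0 : EuclideanSpace ℝ (Fin d) → ℝ, Measurable p0 → (∀ x, 0 ≤ p0 x) →
          Integrable p0 → (∫ x, p0 x) = 1 →
          ∫⁻ x, ENNReal.ofReal
              (frobNorm d
                  (hessMatrix d (fun y => Real.log (forwardDensity d (σ ^ 2) β p0 t y)) x +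
                    (1 / σ ^ 2) • (1 : Matrix (Fin d) (Fin d) ℝ)) ^ 4 *
                forwardDensity d (σ ^ 2) β p0 t x) ≤
            ENNReal.ofReal C *
              ENNReal.ofReal (1 / scoef (σ ^ 2) β t ^ 8 + 1 / σ ^ 8) *
                ((∫⁻ z, ENNReal.ofReal (‖z‖ ^ 8) ∂(stdGaussMeasure d)) + (d : ℝ≥0∞) ^ 4) := by
  refine ⟨64, by norm_num, fun d _ σ T hσ _ β hβ hβpos _ t ht p0 _ hp0 _ hp1 => ?_⟩
  have hsub : Icc 0 t ⊆ Icc 0 T := Icc_subset_Icc_right ht.2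
  refine hessian_fourth_moment_bound_general hσ ?_ (.of_forall hp0) hp1
  exact intervalIntegral.intervalIntegral_pos_of_pos_on
    ((hβ.mono hsub).intervalIntegrable_of_Icc ht.1.le)
    (fun s hs => hβpos s (hsub (Ioo_subset_Icc_self hs))) ht.1
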